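/- Let ω and φ be as in the context, and let 0 < ε < 1/2 be smaller than a constant depending only on n. If either x₁, x₂ ∈ [0, ε] or x₁, x₂ ∈ [1−ε, 1], then |φ(x₁) − φ(x₂)| ≤ C ε² φ(0), with C depending only on n. -/

import Mathlib

/-!
Integrating the equation from the left end, where `φ' = 0`, gives `ω φ' = -μ ∫₀ˣ ω φ`. By convexity
`Ω(x)` contains a copy of any earlier section `Ω(t)` shrunk by the factor `1 - x`, so
`ω(t) ≤ ω(x) / (1 - x) ^ m` and hence `|φ'(x)| ≤ |μ| / (1 - x) ^ m * ∫₀ˣ |φ|`. On `[0, b]` with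
`b < 1`, Grönwall's inequality then bounds `|φ|` by a multiple of `|φ(0)|`, and therefore `|φ'|` on
`[0, ε]` by a multiple of `ε |φ(0)|`. Reflecting `[0, 1]` gives the same near the right end, with
`|φ(1)|` in place of `|φ(0)|`. Finally `|φ(1)| ≤ 2 |φ(1 - δ)|` for a small fixed `δ` by this
flatness on the right, while `|φ(1 - δ)|` is controlled by `|φ(0)|` from the left.
-/

open MeasureTheory Set Filter Topology RealInnerProductSpace

noncomputable section

/-- The point `(x, y) ∈ ℝ × ℝ^m ≅ ℝ^{m+1}`. -/
def mkPt (m : ℕ) (x : ℝ) (y : EuclideanSpace ℝ (Fin m)) : EuclideanSpace ℝ (Fin (m+1)) :=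
  (EuclideanSpace.equiv (Fin (m+1)) ℝ).symm (Fin.cons x ((EuclideanSpace.equiv (Fin m) ℝ) y))

/-- The cross-section `Ω(s) = {y : (s, y) ∈ Ω}`. -/
def cross {m : ℕ} (Ω : Set (EuclideanSpace ℝ (Fin (m+1)))) (s : ℝ) :
    Set (EuclideanSpace ℝ (Fin m)) := {y | mkPt m s y ∈ Ω}

/-- `ω(s)`: the (n-1)-dimensional volume of the cross-section `Ω(s)`. -/
def ωvol {m : ℕ} (Ω : Set (EuclideanSpace ℝ (Fin (m+1)))) (s : ℝ) : ℝ :=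
  (volume (cross Ω s)).toReal

/-- The Laplacian, as the sum of the pure second derivatives along the standard basis. -/
def lap {k : ℕ} (u : EuclideanSpace ℝ (Fin k) → ℝ) (p : EuclideanSpace ℝ (Fin k)) : ℝ :=
  ∑ i, fderiv ℝ (fun q => fderiv ℝ u q (EuclideanSpace.single i 1)) p (EuclideanSpace.single i 1)

/-- The cross-sectional average `ū(x)` of `u`. -/
def ubarFn {m : ℕ} (Ω : Set (EuclideanSpace ℝ (Fin (m+1))))
    (u : EuclideanSpace ℝ (Fin (m+1)) → ℝ) (x : ℝ) : ℝ :=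
  (∫ y in cross Ω x, u (mkPt m x y)) / ωvol Ω x

/-- `(φ, φd)` is a (nonzero, C¹ on [0,1]) solution of the Neumann problem
`-(ω φ')' = μ ω φ` on (0,1), with `φ'(0) = φ'(1) = 0`. -/
def NeumannSol (ω : ℝ → ℝ) (μ : ℝ) (φ φd : ℝ → ℝ) : Prop :=
  (∀ x ∈ Icc (0:ℝ) 1, HasDerivWithinAt φ (φd x) (Icc 0 1) x) ∧
  ContinuousOn φd (Icc 0 1) ∧ φd 0 = 0 ∧ φd 1 = 0 ∧
  (∃ x ∈ Icc (0:ℝ) 1, φ x ≠ 0) ∧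
  ∀ x ∈ Ioo (0:ℝ) 1, HasDerivAt (fun t => ω t * φd t) (-(μ * ω x * φ x)) x

/-- `μ` is a Neumann eigenvalue of `-(ω φ')' = μ ω φ`. -/
def IsNeumannEigenvalue (ω : ℝ → ℝ) (μ : ℝ) : Prop := ∃ φ φd, NeumannSol ω μ φ φd

theorem norm_le_exp_mul_of_norm_deriv_le_integral {E : Type*} [NormedAddCommGroup E]
    [NormedSpace ℝ E] {f f' : ℝ → E} {a b K x : ℝ} (hf : ContinuousOn f (Icc a b))
    (hf' : ∀ t ∈ Ico a b, HasDerivWithinAt f (f' t) (Ici t) t)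
    (hbound : ∀ t ∈ Ico a b, ‖f' t‖ ≤ K * ∫ s in a..t, ‖f s‖) (hx : x ∈ Icc a b) :
    ‖f x‖ ≤ Real.exp (max K 1 * (x - a)) * ‖f a‖ := by
  have hab : a ≤ b := hx.1.trans hx.2
  have hint : ∀ t ∈ Icc a b, IntervalIntegrable (fun s => ‖f s‖) volume a t := fun t ht =>
    (hf.norm.mono (Icc_subset_Icc_right ht.2)).intervalIntegrable_of_Icc ht.1
  -- Adjoining the integral as a second component turns the hypothesis into `‖F'‖ ≤ max K 1 * ‖F‖`.
  set F : ℝ → E × ℝ := fun t => (f t, ∫ s in a..t, ‖f s‖) with hF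
  have hFcont : ContinuousOn F (Icc a b) := by
    have hprim := intervalIntegral.continuousOn_primitive_interval' (hint b ⟨hab, le_rfl⟩)
      left_mem_uIcc
    rw [uIcc_of_le hab] at hprim
    exact hf.prodMk hprim
  have hFderiv : ∀ t ∈ Ico a b, HasDerivWithinAt F (f' t, ‖f t‖) (Ici t) t := by
    intro t ht
    have ht' : t ∈ Icc a b := Ico_subset_Icc_self ht
    have : Fact (t ∈ Icc a b) := ⟨ht'⟩
    have hprim := intervalIntegral.integral_hasDerivWithinAt_right (s := Icc a b) (hint t ht')
      (hf.norm.stronglyMeasurableAtFilter_nhdsWithin measurableSet_Icc t) (hf.norm t ht')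
    exact (hf' t ht).prodMk (hprim.mono_of_mem_nhdsWithin
      (mem_of_superset (Icc_mem_nhdsGE ht.2) (Icc_subset_Icc_left ht.1)))
  have hFbound : ∀ t ∈ Ico a b, ‖(f' t, ‖f t‖)‖ ≤ max K 1 * ‖F t‖ + 0 := by
    intro t ht
    have hI : 0 ≤ ∫ s in a..t, ‖f s‖ :=
      intervalIntegral.integral_nonneg ht.1 fun s _ => norm_nonneg (f s)
    rw [add_zero, Prod.norm_mk, norm_norm]
    refine max_le ((hbound t ht).trans ?_) ?_
    · gcongr
      · exact le_max_left K 1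
      · exact (le_abs_self _).trans (norm_snd_le (F t))
    · rw [← one_mul ‖f t‖]
      gcongr
      · exact le_max_right K 1
      · exact norm_fst_le (F t)
  have hF0 : ‖F a‖ ≤ ‖f a‖ := by simp [hF, Prod.norm_mk]
  calc ‖f x‖ ≤ ‖F x‖ := norm_fst_le (F x)
    _ ≤ gronwallBound ‖f a‖ (max K 1) 0 (x - a) :=
      norm_le_gronwallBound_of_norm_deriv_right_le hFcont hFderiv hF0 hFbound x hx
    _ = Real.exp (max K 1 * (x - a)) * ‖f a‖ := by rw [gronwallBound_ε0, mul_comm]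

/-- A positive weight on `(0, 1)` decaying no faster than the `m`-th power of an affine function
that vanishes at another point. Cross-sectional volumes of `(m + 1)`-dimensional convex sets have
this property, because the set contains the cone over a section with apex in another section; it is
weaker than the concavity of `ω ^ (1 / m)` given by the Brunn–Minkowski inequality. -/
structure ConeWeight (m : ℕ) (ω : ℝ → ℝ) : Prop where
  pos : ∀ x ∈ Ioo (0 : ℝ) 1, 0 < ω x
  pow_mul_le : ∀ ⦃t s⦄, t ∈ Ioo (0 : ℝ) 1 → s ∈ Ioo (0 : ℝ) 1 → ∀ ⦃a b : ℝ⦄, 0 ≤ a → 0 ≤ b →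
    a + b = 1 → a ^ m * ω t ≤ ω (a * t + b * s)

namespace ConeWeight

variable {m : ℕ} {ω : ℝ → ℝ}

theorem reflect (hω : ConeWeight m ω) : ConeWeight m (fun x => ω (1 - x)) where
  pos x hx := hω.pos (1 - x) (Ioo.one_sub_mem hx)
  pow_mul_le t s ht hs a b ha hb hab := by
    have hcomb : 1 - (a * t + b * s) = a * (1 - t) + b * (1 - s) := by
      linear_combination -hab
    rw [hcomb]
    exact hω.pow_mul_le (Ioo.one_sub_mem ht) (Ioo.one_sub_mem hs) ha hb hab

theorem le_div_one_sub_pow (hω : ConeWeight m ω) {t x : ℝ} (ht : 0 < t) (htx : t ≤ x)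
    (hx : x < 1) : ω t ≤ ω x / (1 - x) ^ m := by
  have hx0 : 0 < x := ht.trans_le htx
  have hx1 : 0 < 1 - x := sub_pos.2 hx
  -- The apex for which `x` divides the segment from `t` in the ratio `x : 1 - x`.
  set s : ℝ := 1 - (1 - x) * t / x with hs
  have hgap : (1 - x) * t / x ∈ Ioo (0 : ℝ) 1 := by
    refine ⟨by positivity, (div_lt_one hx0).2 ?_⟩
    nlinarith [mul_pos hx0 ht]
  have hcomb : (1 - x) * t + x * s = x := by
    rw [hs]
    field_simp
    ring
  have hcone := hω.pow_mul_le ⟨ht, htx.trans_lt hx⟩ (Ioo.one_sub_mem hgap) hx1.le hx0.le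
    (sub_add_cancel 1 x)
  rw [← hs, hcomb] at hcone
  rwa [le_div_iff₀ (pow_pos hx1 m), mul_comm]

end ConeWeight

namespace NeumannSol

variable {m : ℕ} {ω φ φd : ℝ → ℝ} {μ b K : ℝ}

theorem hasDerivWithinAt (hφ : NeumannSol ω μ φ φd) {x : ℝ} (hx : x ∈ Icc (0 : ℝ) 1) :
    HasDerivWithinAt φ (φd x) (Icc 0 1) x :=
  hφ.1 x hx

theorem continuousOn (hφ : NeumannSol ω μ φ φd) : ContinuousOn φ (Icc 0 1) :=
  fun _ hx => (hφ.hasDerivWithinAt hx).continuousWithinAt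

theorem hasDerivAt_flux (hφ : NeumannSol ω μ φ φd) {x : ℝ} (hx : x ∈ Ioo (0 : ℝ) 1) :
    HasDerivAt (fun t => ω t * φd t) (-(μ * ω x * φ x)) x :=
  hφ.2.2.2.2.2 x hx

theorem reflect (hφ : NeumannSol ω μ φ φd) :
    NeumannSol (fun x => ω (1 - x)) μ (fun x => φ (1 - x)) (fun x => -φd (1 - x)) := by
  obtain ⟨hderiv, hcont, hzero, hone, ⟨z, hz, hφz⟩, hode⟩ := hφ
  have hmaps : MapsTo (fun x : ℝ => 1 - x) (Icc 0 1) (Icc 0 1) := fun _ => Icc.one_sub_mem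
  refine ⟨fun x hx => ?_, (hcont.comp (by fun_prop) hmaps).neg, by simp [hone], by simp [hzero],
    ⟨1 - z, hmaps hz, by simpa using hφz⟩, fun x hx => ?_⟩
  · simpa [Function.comp_def] using (hderiv (1 - x) (hmaps hx)).comp x
      (((hasDerivAt_id x).const_sub 1).hasDerivWithinAt) hmaps
  · simpa [Function.comp_def] using ((hode (1 - x) (Ioo.one_sub_mem hx)).comp x
      ((hasDerivAt_id x).const_sub 1)).fun_neg

theorem continuousOn_flux (hω : ConeWeight m ω) (hφ : NeumannSol ω μ φ φd) {x : ℝ} (hx : x < 1) :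
    ContinuousOn (fun t => ω t * φd t) (Icc 0 x) := by
  have ⟨_, hcont, hzero, _⟩ := hφ
  intro t ht
  rcases ht.1.eq_or_lt with rfl | ht0
  · set W : ℝ := ω x / (1 - x) ^ m
    have hbound : ∀ s ∈ Icc 0 x, ‖ω s * φd s‖ ≤ W * ‖φd s‖ := by
      intro s hs
      rcases hs.1.eq_or_lt with rfl | hs0
      · simp [hzero]
      · rw [norm_mul, Real.norm_of_nonneg (hω.pos s ⟨hs0, hs.2.trans_lt hx⟩).le]
        gcongr
        exact hω.le_div_one_sub_pow hs0 hs.2 hx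
    have hlim : Tendsto (fun s => W * ‖φd s‖) (𝓝[Icc 0 x] 0) (𝓝 0) := by
      simpa [hzero] using
        ((hcont.mono (Icc_subset_Icc_right hx.le)) 0 ht).tendsto.norm.const_mul W
    simpa [ContinuousWithinAt, hzero] using
      squeeze_zero_norm' (eventually_mem_nhdsWithin.mono hbound) hlim
  · exact (hφ.hasDerivAt_flux ⟨ht0, ht.2.trans_lt hx⟩).continuousAt.continuousWithinAt

theorem abs_deriv_le_mul_integral (hω : ConeWeight m ω) (hφ : NeumannSol ω μ φ φd) {x : ℝ}
    (hx : x ∈ Ico (0 : ℝ) 1) : |φd x| ≤ |μ| / (1 - x) ^ m * ∫ t in (0 : ℝ)..x, |φ t| := by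
  have hzero : φd 0 = 0 := hφ.2.2.1
  rcases hx.1.eq_or_lt with rfl | hx0
  · simp [hzero]
  have hωx : 0 < ω x := hω.pos x ⟨hx0, hx.2⟩
  set W : ℝ := ω x / (1 - x) ^ m with hW
  have hIoo : ∀ t ∈ Ioo 0 x, t ∈ Ioo (0 : ℝ) 1 := fun t ht => ⟨ht.1, ht.2.trans hx.2⟩
  have hbound : ∀ t ∈ Ioo 0 x, ‖deriv (fun s => ω s * φd s) t‖ ≤ |μ| * W * |φ t| := by
    intro t ht
    rw [(hφ.hasDerivAt_flux (hIoo t ht)).deriv, norm_neg, norm_mul, norm_mul,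
      Real.norm_of_nonneg (hω.pos t (hIoo t ht)).le]
    exact mul_le_mul_of_nonneg_right (mul_le_mul_of_nonneg_left
      (hω.le_div_one_sub_pow ht.1 ht.2.le hx.2) (abs_nonneg μ)) (abs_nonneg (φ t))
  have hφint : IntervalIntegrable (fun t => |φ t|) volume 0 x :=
    (hφ.continuousOn.mono (Icc_subset_Icc_right hx.2.le)).abs.intervalIntegrable_of_Icc hx.1
  have hflux := norm_sub_le_integral_of_norm_deriv_le_of_le hx.1 (hφ.continuousOn_flux hω hx.2)
    (fun t ht => (hφ.hasDerivAt_flux (hIoo t ht)).differentiableAt.differentiableWithinAt)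
    (ae_of_all _ hbound) (hφint.const_mul (|μ| * W))
  rw [hzero, mul_zero, sub_zero, norm_mul, Real.norm_of_nonneg hωx.le, Real.norm_eq_abs,
    intervalIntegral.integral_const_mul] at hflux
  refine le_of_mul_le_mul_left (hflux.trans_eq ?_) hωx
  rw [hW]
  ring

theorem abs_deriv_le_mul_integral_of_le (hω : ConeWeight m ω) (hφ : NeumannSol ω μ φ φd)
    (hb : b < 1) (hK : |μ| / (1 - b) ^ m ≤ K) {x : ℝ} (hx : x ∈ Icc 0 b) :
    |φd x| ≤ K * ∫ t in (0 : ℝ)..x, |φ t| := by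
  have : 0 < 1 - b := sub_pos.2 hb
  have hI : 0 ≤ ∫ t in (0 : ℝ)..x, |φ t| :=
    intervalIntegral.integral_nonneg hx.1 fun t _ => abs_nonneg (φ t)
  calc |φd x| ≤ |μ| / (1 - x) ^ m * ∫ t in (0 : ℝ)..x, |φ t| :=
      hφ.abs_deriv_le_mul_integral hω ⟨hx.1, hx.2.trans_lt hb⟩
    _ ≤ |μ| / (1 - b) ^ m * ∫ t in (0 : ℝ)..x, |φ t| := by
      gcongr
      exact hx.2
    _ ≤ K * ∫ t in (0 : ℝ)..x, |φ t| := by gcongr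

theorem abs_le_exp_mul_abs_zero (hω : ConeWeight m ω) (hφ : NeumannSol ω μ φ φd) (hb : b < 1)
    (hK : |μ| / (1 - b) ^ m ≤ K) {x : ℝ} (hx : x ∈ Icc 0 b) :
    |φ x| ≤ Real.exp (max K 1) * |φ 0| := by
  have hgrowth : ‖φ x‖ ≤ Real.exp (max K 1 * (x - 0)) * ‖φ 0‖ :=
    norm_le_exp_mul_of_norm_deriv_le_integral
      (hφ.continuousOn.mono (Icc_subset_Icc_right hb.le))
      (fun t ht => (hφ.hasDerivWithinAt ⟨ht.1, (ht.2.trans hb).le⟩).mono_of_mem_nhdsWithin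
        (mem_of_superset (Icc_mem_nhdsGE (ht.2.trans hb)) (Icc_subset_Icc_left ht.1)))
      (fun t ht => hφ.abs_deriv_le_mul_integral_of_le hω hb hK (Ico_subset_Icc_self ht)) hx
  refine hgrowth.trans (mul_le_mul_of_nonneg_right (Real.exp_le_exp.2 ?_) (norm_nonneg _))
  exact mul_le_of_le_one_right (zero_le_one.trans (le_max_right K 1)) (by linarith [hx.2])

theorem abs_deriv_le_mul (hω : ConeWeight m ω) (hφ : NeumannSol ω μ φ φd) (hb : b < 1)
    (hK : |μ| / (1 - b) ^ m ≤ K) {x : ℝ} (hx : x ∈ Icc 0 b) :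
    |φd x| ≤ K * (x * (Real.exp (max K 1) * |φ 0|)) := by
  have hK0 : 0 ≤ K :=
    (div_nonneg (abs_nonneg μ) (pow_nonneg (sub_nonneg.2 hb.le) m)).trans hK
  have hφint : IntervalIntegrable (fun t => |φ t|) volume 0 x :=
    ContinuousOn.intervalIntegrable_of_Icc hx.1
      (hφ.continuousOn.mono (Icc_subset_Icc_right (hx.2.trans hb.le))).abs
  have hI : ∫ t in (0 : ℝ)..x, |φ t| ≤ x * (Real.exp (max K 1) * |φ 0|) := by
    simpa [mul_left_comm] using
      intervalIntegral.integral_mono_on hx.1 hφint intervalIntegrable_const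
        fun t ht => hφ.abs_le_exp_mul_abs_zero hω hb hK ⟨ht.1, ht.2.trans hx.2⟩
  exact (hφ.abs_deriv_le_mul_integral_of_le hω hb hK hx).trans (by gcongr)

theorem abs_sub_le_mul_sq (hω : ConeWeight m ω) (hφ : NeumannSol ω μ φ φd) (hb : b < 1)
    (hK : |μ| / (1 - b) ^ m ≤ K) {ε x y : ℝ} (hε : ε ≤ b) (hx : x ∈ Icc 0 ε) (hy : y ∈ Icc 0 ε) :
    |φ x - φ y| ≤ K * Real.exp (max K 1) * ε ^ 2 * |φ 0| := by
  have hK0 : 0 ≤ K :=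
    (div_nonneg (abs_nonneg μ) (pow_nonneg (sub_nonneg.2 hb.le) m)).trans hK
  have hε0 : 0 ≤ ε := hx.1.trans hx.2
  have hsub : Icc 0 ε ⊆ Icc (0 : ℝ) 1 := Icc_subset_Icc_right (hε.trans hb.le)
  have hbound : ∀ t ∈ Icc 0 ε, ‖φd t‖ ≤ K * (ε * (Real.exp (max K 1) * |φ 0|)) := by
    intro t ht
    refine (hφ.abs_deriv_le_mul hω hb hK ⟨ht.1, ht.2.trans hε⟩).trans ?_
    gcongr
    exact ht.2
  calc |φ x - φ y| ≤ K * (ε * (Real.exp (max K 1) * |φ 0|)) * |x - y| :=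
      (convex_Icc 0 ε).norm_image_sub_le_of_norm_hasDerivWithin_le
        (fun t ht => (hφ.hasDerivWithinAt (hsub ht)).mono hsub) hbound hy hx
    _ ≤ K * (ε * (Real.exp (max K 1) * |φ 0|)) * ε := by
      gcongr
      simpa using abs_sub_le_of_le_of_le hx.1 hx.2 hy.1 hy.2
    _ = K * Real.exp (max K 1) * ε ^ 2 * |φ 0| := by ring

theorem exists_abs_one_le_mul_abs_zero (m : ℕ) {Λ : ℝ} (hΛ : 0 < Λ) :
    ∃ G ≥ 1, ∀ ⦃ω : ℝ → ℝ⦄ ⦃μ : ℝ⦄ ⦃φ φd : ℝ → ℝ⦄, ConeWeight m ω → NeumannSol ω μ φ φd →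
      |μ| ≤ Λ → |φ 1| ≤ G * |φ 0| := by
  set K : ℝ := Λ / (1 - 1 / 2) ^ m with hK
  have hK0 : 0 < K := div_pos hΛ (by norm_num)
  set A : ℝ := K * Real.exp (max K 1)
  have hA : 0 < A := mul_pos hK0 (Real.exp_pos _)
  obtain ⟨δ, hδ0, hδ2, hAδ⟩ : ∃ δ : ℝ, 0 < δ ∧ δ ≤ 1 / 2 ∧ A * δ ^ 2 ≤ 1 / 2 := by
    refine ⟨1 / (A + 2), by positivity, by gcongr; linarith, ?_⟩
    rw [div_pow, one_pow, mul_one_div, div_le_div_iff₀ (by positivity) two_pos]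
    nlinarith
  set L : ℝ := Λ / (1 - (1 - δ)) ^ m with hL
  have hexp : 1 ≤ Real.exp (max L 1) :=
    Real.one_le_exp (zero_le_one.trans (le_max_right L 1))
  refine ⟨2 * Real.exp (max L 1), by linarith, fun ω μ φ φd hω hφ hμ => ?_⟩
  have hμK : |μ| / (1 - 1 / 2) ^ m ≤ K := by rw [hK]; gcongr
  have hμL : |μ| / (1 - (1 - δ)) ^ m ≤ L := by rw [hL, sub_sub_cancel]; gcongr
  have hright : |φ 1 - φ (1 - δ)| ≤ A * δ ^ 2 * |φ 1| := by
    simpa only [sub_zero] using hφ.reflect.abs_sub_le_mul_sq hω.reflect (by norm_num) hμK hδ2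
      (left_mem_Icc.2 hδ0.le) (right_mem_Icc.2 hδ0.le)
  have hleft : |φ (1 - δ)| ≤ Real.exp (max L 1) * |φ 0| :=
    hφ.abs_le_exp_mul_abs_zero hω (sub_lt_self 1 hδ0) hμL (right_mem_Icc.2 (by linarith))
  have habsorb : A * δ ^ 2 * |φ 1| ≤ 1 / 2 * |φ 1| := by gcongr
  linarith [abs_sub_abs_le_abs_sub (φ 1) (φ (1 - δ))]

end NeumannSol

section CrossSection

variable {m : ℕ} {Ω : Set (EuclideanSpace ℝ (Fin (m + 1)))}

theorem continuous_mkPt (m : ℕ) (s : ℝ) : Continuous (mkPt m s) :=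
  (EuclideanSpace.equiv (Fin (m + 1)) ℝ).symm.continuous.comp
    (continuous_const.finCons (EuclideanSpace.equiv (Fin m) ℝ).continuous)

theorem mkPt_add_smul (a b t s : ℝ) (y z : EuclideanSpace ℝ (Fin m)) :
    mkPt m (a * t + b * s) (a • y + b • z) = a • mkPt m t y + b • mkPt m s z := by
  ext i
  refine Fin.cases ?_ (fun j => ?_) i <;> simp [mkPt]

theorem norm_le_norm_mkPt (s : ℝ) (y : EuclideanSpace ℝ (Fin m)) : ‖y‖ ≤ ‖mkPt m s y‖ := by
  rw [EuclideanSpace.norm_eq, EuclideanSpace.norm_eq, Fin.sum_univ_succ]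
  exact Real.sqrt_le_sqrt (le_add_of_nonneg_left (sq_nonneg _))

theorem isOpen_cross (ho : IsOpen Ω) (s : ℝ) : IsOpen (cross Ω s) :=
  ho.preimage (continuous_mkPt m s)

theorem isBounded_cross (hb : Bornology.IsBounded Ω) (s : ℝ) :
    Bornology.IsBounded (cross Ω s) := by
  obtain ⟨R, hR⟩ := hb.exists_norm_le
  exact isBounded_iff_forall_norm_le.2 ⟨R, fun y hy => (norm_le_norm_mkPt s y).trans (hR _ hy)⟩

theorem image_homothety_cross_subset (hc : Convex ℝ Ω) {a b t s : ℝ}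
    {z : EuclideanSpace ℝ (Fin m)} (hz : z ∈ cross Ω s) (ha : 0 ≤ a) (hb : 0 ≤ b)
    (hab : a + b = 1) : AffineMap.homothety z a '' cross Ω t ⊆ cross Ω (a * t + b * s) := by
  rintro _ ⟨y, hy, rfl⟩
  have hmem : a • mkPt m t y + b • mkPt m s z ∈ Ω := hc hy hz ha hb hab
  rw [← mkPt_add_smul, add_comm (a • y)] at hmem
  rwa [AffineMap.homothety_eq_lineMap, AffineMap.lineMap_apply_module, ← eq_sub_of_add_eq' hab]

theorem pow_mul_ωvol_le (hc : Convex ℝ Ω) (hbdd : Bornology.IsBounded Ω) {a b t s : ℝ}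
    (hs : (cross Ω s).Nonempty) (ha : 0 ≤ a) (hb : 0 ≤ b) (hab : a + b = 1) :
    a ^ m * ωvol Ω t ≤ ωvol Ω (a * t + b * s) := by
  obtain ⟨z, hz⟩ := hs
  calc a ^ m * ωvol Ω t = (volume (AffineMap.homothety z a '' cross Ω t)).toReal := by
        simp [ωvol, Measure.addHaar_image_homothety, abs_of_nonneg ha,
          ENNReal.toReal_ofReal (pow_nonneg ha m)]
    _ ≤ ωvol Ω (a * t + b * s) :=
        ENNReal.toReal_mono (isBounded_cross hbdd _).measure_lt_top.ne
          (measure_mono (image_homothety_cross_subset hc hz ha hb hab))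

theorem ωvol_pos (ho : IsOpen Ω) (hb : Bornology.IsBounded Ω) {s : ℝ}
    (hs : (cross Ω s).Nonempty) : 0 < ωvol Ω s :=
  ENNReal.toReal_pos ((isOpen_cross ho s).measure_pos volume hs).ne'
    (isBounded_cross hb s).measure_lt_top.ne

theorem coneWeight_ωvol (ho : IsOpen Ω) (hc : Convex ℝ Ω) (hb : Bornology.IsBounded Ω)
    (hne : ∀ s ∈ Ioo (0 : ℝ) 1, (cross Ω s).Nonempty) : ConeWeight m (ωvol Ω) where
  pos s hs := ωvol_pos ho hb (hne s hs)
  pow_mul_le _ s _ hs _ _ := pow_mul_ωvol_le hc hb (hne s hs)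

end CrossSection

theorem ode_eigenfunction_flat_at_ends_general (m : ℕ) {Λ : ℝ} (hΛ : 0 < Λ) :
    ∃ C > (0 : ℝ), ∀ ⦃ω : ℝ → ℝ⦄ ⦃μ : ℝ⦄ ⦃φ φd : ℝ → ℝ⦄, ConeWeight m ω → NeumannSol ω μ φ φd →
      |μ| ≤ Λ → ∀ ⦃ε : ℝ⦄, ε ≤ 1 / 2 → ∀ ⦃x₁ x₂ : ℝ⦄,
        (x₁ ∈ Icc 0 ε ∧ x₂ ∈ Icc 0 ε) ∨ (x₁ ∈ Icc (1 - ε) 1 ∧ x₂ ∈ Icc (1 - ε) 1) →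
        |φ x₁ - φ x₂| ≤ C * ε ^ 2 * |φ 0| := by
  obtain ⟨G, hG, hφ1⟩ := NeumannSol.exists_abs_one_le_mul_abs_zero m hΛ
  set K : ℝ := Λ / (1 - 1 / 2) ^ m with hK
  have hK0 : 0 < K := div_pos hΛ (by norm_num)
  set A : ℝ := K * Real.exp (max K 1)
  have hA : 0 < A := mul_pos hK0 (Real.exp_pos _)
  refine ⟨A * G, by positivity, fun ω μ φ φd hω hφ hμ ε hε x₁ x₂ hx => ?_⟩
  have hμK : |μ| / (1 - 1 / 2) ^ m ≤ K := by rw [hK]; gcongr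
  rcases hx with ⟨hx₁, hx₂⟩ | ⟨hx₁, hx₂⟩
  · calc |φ x₁ - φ x₂| ≤ A * ε ^ 2 * |φ 0| :=
          hφ.abs_sub_le_mul_sq hω (by norm_num) hμK hε hx₁ hx₂
      _ ≤ A * G * ε ^ 2 * |φ 0| := by
          gcongr
          exact le_mul_of_one_le_right hA.le hG
  · have hmem : ∀ x ∈ Icc (1 - ε) 1, 1 - x ∈ Icc 0 ε := fun x hx =>
      ⟨sub_nonneg.2 hx.2, sub_le_comm.1 hx.1⟩
    calc |φ x₁ - φ x₂| ≤ A * ε ^ 2 * |φ 1| := by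
          simpa only [sub_sub_cancel, sub_zero] using hφ.reflect.abs_sub_le_mul_sq hω.reflect
            (by norm_num) hμK hε (hmem x₁ hx₁) (hmem x₂ hx₂)
      _ ≤ A * ε ^ 2 * (G * |φ 0|) := by
          gcongr
          exact hφ1 hω hφ hμ
      _ = A * G * ε ^ 2 * |φ 0| := by ring

/-- `φ` varies by at most `C ε² φ(0)` on each of the end intervals
`[0, ε]` and `[1-ε, 1]`. -/
theorem ode_eigenfunction_flat_at_ends
    (m : ℕ) (hm : 1 ≤ m) (cμ Cμ : ℝ) (hcμ : 0 < cμ) (hCμ : cμ ≤ Cμ) :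
    ∃ C > (0:ℝ), ∃ ε₀ > (0:ℝ), ∀ ε : ℝ, 0 < ε → ε < 1/2 → ε < ε₀ →
    ∀ (Ω : Set (EuclideanSpace ℝ (Fin (m+1)))) (φ φd : ℝ → ℝ) (μ : ℝ),
      IsOpen Ω → Convex ℝ Ω → Bornology.IsBounded Ω →
      -- Ω ⊆ (0,1) × ℝ^{n-1}
      (∀ x y, mkPt m x y ∈ Ω → x ∈ Ioo (0:ℝ) 1) →
      -- nonempty cross-sections
      (∀ s ∈ Ioo (0:ℝ) 1, (cross Ω s).Nonempty) →
      -- φ is a first Neumann eigenfunction of -(ωφ')' = μωφ, with φ(0) > 0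
      NeumannSol (ωvol Ω) μ φ φd →
      0 < μ →
      (∀ μ', 0 < μ' → IsNeumannEigenvalue (ωvol Ω) μ' → μ ≤ μ') →
      (∫ x in (0:ℝ)..1, ωvol Ω x * φ x) = 0 →
      0 < φ 0 →
      -- uniform bounds on μ, assumed as hypotheses
      cμ ≤ μ → μ ≤ Cμ →
      ∀ x₁ x₂ : ℝ,
        ((x₁ ∈ Icc (0:ℝ) ε ∧ x₂ ∈ Icc (0:ℝ) ε) ∨
         (x₁ ∈ Icc (1 - ε) (1:ℝ) ∧ x₂ ∈ Icc (1 - ε) (1:ℝ))) →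
        |φ x₁ - φ x₂| ≤ C * ε ^ 2 * φ 0 := by
  obtain ⟨C, hC, hflat⟩ := ode_eigenfunction_flat_at_ends_general m (hcμ.trans_le hCμ)
  refine ⟨C, hC, 1, one_pos, ?_⟩
  intro ε _ hε _ Ω φ φd μ ho hc hb _ hne hφ hμ _ _ hφ0 _ hμC x₁ x₂ hx
  simpa only [abs_of_pos hφ0] using hflat (coneWeight_ωvol ho hc hb hne) hφ
    ((abs_of_pos hμ).trans_le hμC) hε.le hx
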